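/- Let χ be a probability distribution on a finite set A. There exists a constant C > 0, depending only on χ, such that for every n ≥ 1 and every δ ≥ 0, the probability that a sample k drawn from the product distribution χ^n lies in the core set C^{n,δ}_χ satisfies Pr_{k ← χ^n}[k ∈ C^{n,δ}_χ] ≥ 1/2 − C/√n. -/

import Mathlib

open scoped Classical

/-!
Let `f = log₂ P + H`, which is centred under `P`. A string whose sum `∑ i, f (a i)` is nonnegative
lies in the core set, so it suffices that a sum of `n` independent centred variables with finite
third moment is nonnegative with probability `1/2 + O(1/√n)`: the Berry–Esseen bound at the mean.
To see this, replace the step function at the origin by functions with Fourier transform supported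
in `[-T, T]`. If `φ` is the characteristic function of one summand, the resulting error is
`O(∫ t in 0..1, |Im φ(T t)^n| / t + |φ(T t)|^n)`. Near the origin `|Im φ(t)| = O(t³)`, because the
summands are centred, and `|φ(t)| ≤ exp (-c t²)`, so the integral is `O(1/√n)`.
-/

section

open MeasureTheory ProbabilityTheory Set Filter Real
open scoped Topology Interval

section Transforms

/-- The cosine transform of a weight `w` supported on `[0, 1]`. -/
noncomputable def cosTransform (w : ℝ → ℝ) (x : ℝ) : ℝ :=
  ∫ t in 0..1, w t * cos (t * x)

/-- The transform `x ↦ ∫ t in 0..1, w t * (sin (t * x) / t)` of a weight `w`, an odd primitive of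
`cosTransform w`. The quotient is written with `sinc` so that it is continuous at `t = 0`. -/
noncomputable def sinTransform (w : ℝ → ℝ) (x : ℝ) : ℝ :=
  ∫ t in 0..1, w t * (x * sinc (t * x))

variable {w : ℝ → ℝ}

lemma mul_sinc_mul {t : ℝ} (ht : t ≠ 0) (x : ℝ) : x * sinc (t * x) = sin (t * x) / t := by
  rcases eq_or_ne x 0 with rfl | hx
  · simp
  · rw [sinc_of_ne_zero (mul_ne_zero ht hx)]
    field_simp

lemma integral_cos_mul (t x : ℝ) : ∫ y in 0..x, cos (t * y) = x * sinc (t * x) := by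
  rcases eq_or_ne t 0 with rfl | ht
  · simp
  · rw [mul_sinc_mul ht, intervalIntegral.integral_comp_mul_left _ ht, integral_cos]
    simp [div_eq_inv_mul]

lemma cosTransform_neg (w : ℝ → ℝ) (x : ℝ) : cosTransform w (-x) = cosTransform w x := by
  simp only [cosTransform, mul_neg, cos_neg]

lemma sinTransform_neg (w : ℝ → ℝ) (x : ℝ) : sinTransform w (-x) = -sinTransform w x := by
  simp only [sinTransform, mul_neg, sinc_neg, neg_mul, intervalIntegral.integral_neg]

lemma continuous_cosTransform (hw : IntervalIntegrable w volume 0 1) :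
    Continuous (cosTransform w) := by
  refine intervalIntegral.continuous_of_dominated_interval (bound := fun t => |w t|)
    (fun x => hw.def'.aestronglyMeasurable.mul (by fun_prop)) (fun x => ?_) hw.abs
    (Eventually.of_forall fun t _ => by fun_prop)
  filter_upwards with t _
  rw [norm_mul, norm_eq_abs]
  exact mul_le_of_le_one_right (abs_nonneg _) (abs_cos_le_one _)

lemma sinTransform_eq_integral_cosTransform (hw : IntervalIntegrable w volume 0 1) (x : ℝ) :
    sinTransform w x = ∫ y in 0..x, cosTransform w y := by
  have hint : IntegrableOn (fun p : ℝ × ℝ => w p.1 * cos (p.1 * p.2)) (Ι 0 1 ×ˢ Ι 0 x) := by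
    rw [IntegrableOn, Measure.volume_eq_prod, ← Measure.prod_restrict]
    refine (hw.def'.mul_prod (intervalIntegrable_const (c := (1 : ℝ))).def').mono
      (hw.def'.aestronglyMeasurable.comp_fst.mul (by fun_prop)) (Eventually.of_forall fun p => ?_)
    simpa using mul_le_of_le_one_right (abs_nonneg (w p.1)) (abs_cos_le_one (p.1 * p.2))
  calc sinTransform w x = ∫ t in 0..1, ∫ y in 0..x, w t * cos (t * y) := by
        simp only [sinTransform, intervalIntegral.integral_const_mul, integral_cos_mul]
    _ = ∫ y in 0..x, cosTransform w y := intervalIntegral_intervalIntegral_swap hint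

lemma hasDerivAt_sinTransform (hw : IntervalIntegrable w volume 0 1) (x : ℝ) :
    HasDerivAt (sinTransform w) (cosTransform w x) x := by
  rw [funext (sinTransform_eq_integral_cosTransform hw)]
  exact (continuous_cosTransform hw).integral_hasStrictDerivAt 0 x |>.hasDerivAt

lemma abs_sinTransform_le (hw : ∀ t ∈ Ioc (0 : ℝ) 1, |w t| ≤ 1) (x : ℝ) :
    |sinTransform w x| ≤ |x| := by
  have hbound : ∀ t ∈ Ι (0 : ℝ) 1, ‖w t * (x * sinc (t * x))‖ ≤ |x| := fun t ht => by
    rw [uIoc_of_le zero_le_one] at ht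
    rw [norm_mul, norm_mul, norm_eq_abs, norm_eq_abs, norm_eq_abs]
    calc |w t| * (|x| * |sinc (t * x)|) ≤ 1 * (|x| * 1) := by
          gcongr
          exacts [hw t ht, abs_sinc_le_one _]
      _ = |x| := by ring
  simpa [sinTransform] using intervalIntegral.norm_integral_le_of_norm_le_const hbound

lemma sinTransform_nonneg (hw : ∀ t ∈ Icc (0 : ℝ) 1, 0 ≤ w t) {x : ℝ} (hx : x ∈ Icc 0 π) :
    0 ≤ sinTransform w x := by
  refine intervalIntegral.integral_nonneg zero_le_one fun t ht => mul_nonneg (hw t ht) ?_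
  rcases eq_or_ne t 0 with rfl | ht0
  · simpa using hx.1
  · rw [mul_sinc_mul ht0]
    exact div_nonneg (sin_nonneg_of_nonneg_of_le_pi (mul_nonneg ht.1 hx.1)
      ((mul_le_of_le_one_left hx.1 ht.2).trans hx.2)) ht.1

lemma cube_mul_cosTransform_quadratic (a b c x : ℝ) :
    x ^ 3 * cosTransform (fun t => a + b * t + c * t ^ 2) x =
      (a + b + c) * x ^ 2 * sin x + (b + 2 * c) * x * cos x - 2 * c * sin x - b * x := by
  have hderiv : ∀ t ∈ [[(0 : ℝ), 1]], HasDerivAt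
      (fun t => (a + b * t + c * t ^ 2) * (x ^ 2 * sin (t * x))
        + (b + 2 * c * t) * (x * cos (t * x)) - 2 * c * sin (t * x))
      (x ^ 3 * ((a + b * t + c * t ^ 2) * cos (t * x))) t := fun t _ => by
    have hmul : HasDerivAt (fun t : ℝ => t * x) x t := by
      simpa using (hasDerivAt_id t).mul_const x
    have hweight : HasDerivAt (fun t : ℝ => a + b * t + c * t ^ 2) (b + 2 * c * t) t := by
      refine ((((hasDerivAt_id t).const_mul b).const_add a).add
        ((hasDerivAt_pow 2 t).const_mul c)).congr_deriv ?_
      simp only [Nat.cast_ofNat]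
      ring
    have hweight' : HasDerivAt (fun t : ℝ => b + 2 * c * t) (2 * c) t := by
      simpa using ((hasDerivAt_id t).const_mul (2 * c)).const_add b
    refine (((hweight.mul (hmul.sin.const_mul (x ^ 2))).add
      (hweight'.mul (hmul.cos.const_mul x))).sub (hmul.sin.const_mul (2 * c))).congr_deriv ?_
    ring
  rw [cosTransform, ← intervalIntegral.integral_const_mul,
    intervalIntegral.integral_eq_sub_of_hasDerivAt hderiv
      (Continuous.intervalIntegrable (by fun_prop) _ _)]
  simp only [one_mul, zero_mul, sin_zero, cos_zero]
  ring

end Transforms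

section CharFun

variable {w : ℝ → ℝ} {μ : Measure ℝ}

lemma integrable_prod_mul_sinc (hw : IntervalIntegrable w volume 0 1) (hμ : Integrable id μ) :
    Integrable (Function.uncurry fun t x => w t * (x * sinc (t * x)))
      ((volume.restrict (Ι 0 1)).prod μ) := by
  refine (hw.def'.mul_prod hμ).mono
    (hw.def'.aestronglyMeasurable.comp_fst.mul (by fun_prop)) (Eventually.of_forall fun p => ?_)
  simp only [Function.uncurry, norm_mul, norm_eq_abs, id]
  gcongr
  exact mul_le_of_le_one_right (abs_nonneg _) (abs_sinc_le_one _)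

variable [IsFiniteMeasure μ]

lemma integrable_exp_mul_I (t : ℝ) :
    Integrable (fun x : ℝ => Complex.exp (t * x * Complex.I)) μ := by
  refine Integrable.of_bound (by fun_prop) 1 (Eventually.of_forall fun x => ?_)
  rw [← Complex.ofReal_mul, Complex.norm_exp_ofReal_mul_I]

lemma re_charFun (t : ℝ) : (charFun μ t).re = ∫ x, cos (t * x) ∂μ := by
  rw [charFun_apply_real, ← RCLike.re_eq_complex_re, ← integral_re (integrable_exp_mul_I t)]
  simp only [RCLike.re_eq_complex_re, ← Complex.ofReal_mul, Complex.exp_ofReal_mul_I_re]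

lemma im_charFun (t : ℝ) : (charFun μ t).im = ∫ x, sin (t * x) ∂μ := by
  rw [charFun_apply_real, ← RCLike.im_eq_complex_im, ← integral_im (integrable_exp_mul_I t)]
  simp only [RCLike.im_eq_complex_im, ← Complex.ofReal_mul, Complex.exp_ofReal_mul_I_im]

lemma integral_mul_sinc_mul {t : ℝ} (ht : t ≠ 0) :
    ∫ x, x * sinc (t * x) ∂μ = (charFun μ t).im / t := by
  simp only [mul_sinc_mul ht, integral_div, im_charFun]

lemma integrable_prod_mul_cos (hw : IntervalIntegrable w volume 0 1) :
    Integrable (Function.uncurry fun t x => w t * cos (t * x))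
      ((volume.restrict (Ι 0 1)).prod μ) := by
  refine (hw.def'.mul_prod (integrable_const (1 : ℝ))).mono
    (hw.def'.aestronglyMeasurable.comp_fst.mul (by fun_prop)) (Eventually.of_forall fun p => ?_)
  simpa [Function.uncurry] using
    mul_le_of_le_one_right (abs_nonneg (w p.1)) (abs_cos_le_one (p.1 * p.2))

lemma integrable_cosTransform (hw : IntervalIntegrable w volume 0 1) :
    Integrable (cosTransform w) μ := by
  have hint := (integrable_prod_mul_cos (μ := μ) hw).integral_prod_right
  simp only [Function.uncurry, uIoc_of_le zero_le_one,
    ← intervalIntegral.integral_of_le zero_le_one] at hint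
  exact hint

lemma integrable_sinTransform (hw : IntervalIntegrable w volume 0 1) (hμ : Integrable id μ) :
    Integrable (sinTransform w) μ := by
  have hint := (integrable_prod_mul_sinc hw hμ).integral_prod_right
  simp only [Function.uncurry, uIoc_of_le zero_le_one,
    ← intervalIntegral.integral_of_le zero_le_one] at hint
  exact hint

lemma integral_cosTransform (hw : IntervalIntegrable w volume 0 1) :
    ∫ x, cosTransform w x ∂μ = ∫ t in 0..1, w t * (charFun μ t).re := by
  simp only [cosTransform, ← intervalIntegral_integral_swap (integrable_prod_mul_cos hw),
    integral_const_mul, re_charFun]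

lemma integral_sinTransform (hw : IntervalIntegrable w volume 0 1) (hμ : Integrable id μ) :
    ∫ x, sinTransform w x ∂μ = ∫ t in 0..1, w t * ((charFun μ t).im / t) := by
  simp only [sinTransform, ← intervalIntegral_integral_swap (integrable_prod_mul_sinc hw hμ),
    integral_const_mul]
  refine intervalIntegral.integral_congr_ae (Eventually.of_forall fun t ht => ?_)
  rw [uIoc_of_le zero_le_one] at ht
  rw [integral_mul_sinc_mul ht.1.ne']

lemma intervalIntegrable_im_charFun_div (hμ : Integrable id μ) :
    IntervalIntegrable (fun t => (charFun μ t).im / t) volume 0 1 := by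
  have hcont : Continuous fun t : ℝ => ∫ x, x * sinc (t * x) ∂μ := by
    refine continuous_of_dominated (bound := fun x => |x|) (fun t => by fun_prop)
      (fun t => Eventually.of_forall fun x => ?_) hμ.abs (Eventually.of_forall fun x => by fun_prop)
    rw [norm_mul]
    exact mul_le_of_le_one_right (abs_nonneg _) (abs_sinc_le_one _)
  refine (hcont.intervalIntegrable 0 1).congr fun t ht => ?_
  rw [uIoc_of_le zero_le_one] at ht
  exact integral_mul_sinc_mul ht.1.ne'

end CharFun

section Kernels

/-- A bounded odd function with spectrum in `[-1, 1]` that tends to a positive constant at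
infinity: after rescaling, a band-limited substitute for half the sign function. -/
noncomputable def smoothedSign (x : ℝ) : ℝ :=
  sinTransform (fun t => 1 - t ^ 2) x

/-- The function `2 * (x - sin x) / x ^ 3` (with value `1 / 3` at `0`), a positive function with
spectrum in `[-1, 1]` that controls the error made in replacing a step by `smoothedSign`. -/
noncomputable def smoothingError (x : ℝ) : ℝ :=
  cosTransform (fun t => (1 - t) ^ 2) x

lemma intervalIntegrable_one_sub_sq : IntervalIntegrable (fun t : ℝ => 1 - t ^ 2) volume 0 1 :=
  Continuous.intervalIntegrable (by fun_prop) _ _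

lemma intervalIntegrable_sq_one_sub : IntervalIntegrable (fun t : ℝ => (1 - t) ^ 2) volume 0 1 :=
  Continuous.intervalIntegrable (by fun_prop) _ _

lemma abs_one_sub_sq_le {t : ℝ} (ht : t ∈ Ioc (0 : ℝ) 1) : |1 - t ^ 2| ≤ 1 :=
  abs_le.2 ⟨by nlinarith [ht.1, ht.2], sub_le_self 1 (sq_nonneg t)⟩

lemma abs_sq_one_sub_le {t : ℝ} (ht : t ∈ Ioc (0 : ℝ) 1) : |(1 - t) ^ 2| ≤ 1 :=
  abs_le.2 ⟨by nlinarith [ht.1, ht.2], by nlinarith [ht.1, ht.2]⟩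

lemma smoothedSign_neg (x : ℝ) : smoothedSign (-x) = -smoothedSign x :=
  sinTransform_neg _ x

lemma smoothingError_neg (x : ℝ) : smoothingError (-x) = smoothingError x :=
  cosTransform_neg _ x

lemma cube_mul_smoothingError (x : ℝ) : x ^ 3 * smoothingError x = 2 * (x - sin x) := by
  have hquad := cube_mul_cosTransform_quadratic 1 (-2) 1 x
  have hweight : (fun t : ℝ => 1 + -2 * t + 1 * t ^ 2) = fun t => (1 - t) ^ 2 := by
    ext t; ring
  rw [hweight] at hquad
  rw [smoothingError, hquad]
  ring

lemma hasDerivAt_smoothedSign {x : ℝ} (hx : x ≠ 0) :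
    HasDerivAt smoothedSign ((2 * sin x - 2 * x * cos x) / x ^ 3) x := by
  have hquad := cube_mul_cosTransform_quadratic 1 0 (-1) x
  have hweight : (fun t : ℝ => 1 + 0 * t + -1 * t ^ 2) = fun t => 1 - t ^ 2 := by
    ext t; ring
  rw [hweight] at hquad
  refine (hasDerivAt_sinTransform intervalIntegrable_one_sub_sq x).congr_deriv
    ((eq_div_iff (pow_ne_zero 3 hx)).2 ?_)
  rw [mul_comm, hquad]
  ring

lemma smoothedSign_nonneg {x : ℝ} (hx : x ∈ Icc 0 π) : 0 ≤ smoothedSign x :=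
  sinTransform_nonneg (fun _ ht => sub_nonneg.2 (pow_le_one₀ ht.1 ht.2)) hx

lemma abs_smoothedSign_le (x : ℝ) : |smoothedSign x| ≤ |x| :=
  abs_sinTransform_le (fun _ => abs_one_sub_sq_le) x

lemma cube_div_le_sub_sin {x : ℝ} (hx : 0 ≤ x) : x ^ 3 / (16 * (1 + x ^ 2)) ≤ x - sin x := by
  rw [div_le_iff₀ (by positivity)]
  rcases le_total x 1 with hx1 | hx1
  · have hsin := (abs_le.1 (sin_bound (x := x) (by rwa [abs_of_nonneg hx]))).2
    rw [abs_of_nonneg hx] at hsin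
    have hpow : x ^ 5 ≤ x ^ 3 := pow_le_pow_of_le_one hx hx1 (by norm_num)
    nlinarith [pow_nonneg hx 3, sq_nonneg x]
  · rcases le_total x 2 with hx2 | hx2
    · have hsin_one := (abs_le.1 (sin_bound (x := 1) (by norm_num))).2
      have hsin := (abs_le.1 (abs_sin_sub_sin_le x 1)).2
      rw [abs_of_nonneg (sub_nonneg.2 hx1)] at hsin
      norm_num at hsin_one
      nlinarith [sq_nonneg x]
    · nlinarith [sin_le_one x, sq_nonneg x]

lemma inv_one_add_sq_le_smoothingError (x : ℝ) : 1 / (8 * (1 + x ^ 2)) ≤ smoothingError x := by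
  wlog hx : 0 ≤ x generalizing x
  · simpa [smoothingError_neg] using this (-x) (by linarith)
  rcases hx.eq_or_lt with rfl | hx
  · have hzero : smoothingError 0 = 1 / 3 := by
      simp only [smoothingError, cosTransform, mul_zero, cos_zero, mul_one,
        intervalIntegral.integral_comp_sub_left (fun t : ℝ => t ^ 2) 1, integral_pow]
      norm_num
    norm_num [hzero]
  · refine le_of_mul_le_mul_left ?_ (pow_pos hx 3)
    rw [cube_mul_smoothingError]
    calc x ^ 3 * (1 / (8 * (1 + x ^ 2))) = 2 * (x ^ 3 / (16 * (1 + x ^ 2))) := by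
          field_simp; norm_num
      _ ≤ 2 * (x - sin x) := by gcongr; exact cube_div_le_sub_sin hx.le

lemma exists_abs_sub_le_of_abs_deriv_le {s : Set ℝ} (hs : Convex ℝ s)
    {f f' b b' : ℝ → ℝ} (hf : ∀ x ∈ s, HasDerivAt f (f' x) x)
    (hb : ∀ x ∈ s, HasDerivAt b (-b' x) x) (hb0 : ∀ x ∈ s, 0 ≤ b x)
    (hle : ∀ x ∈ s, |f' x| ≤ b' x) : ∃ l, ∀ x ∈ s, |f x - l| ≤ b x := by
  have hsub : MonotoneOn (f - b) s := monotoneOn_of_hasDerivWithinAt_nonneg hs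
    (fun x hx => ((hf x hx).sub (hb x hx)).continuousAt.continuousWithinAt)
    (fun x hx => ((hf x (interior_subset hx)).sub (hb x (interior_subset hx))).hasDerivWithinAt)
    (fun x hx => by linarith [(abs_le.1 (hle x (interior_subset hx))).1])
  have hadd : AntitoneOn (f + b) s := antitoneOn_of_hasDerivWithinAt_nonpos hs
    (fun x hx => ((hf x hx).add (hb x hx)).continuousAt.continuousWithinAt)
    (fun x hx => ((hf x (interior_subset hx)).add (hb x (interior_subset hx))).hasDerivWithinAt)
    (fun x hx => by linarith [(abs_le.1 (hle x (interior_subset hx))).2])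
  have hself : ∀ x ∈ s, (f - b) x ≤ (f + b) x := fun x hx => by
    simp only [Pi.sub_apply, Pi.add_apply]
    linarith [hb0 x hx]
  have hcross : ∀ x ∈ s, ∀ y ∈ s, (f - b) x ≤ (f + b) y := fun x hx y hy => by
    rcases le_total x y with hxy | hxy
    · exact (hsub hx hy hxy).trans (hself y hy)
    · exact (hself x hx).trans (hadd hy hx hxy)
  refine ⟨sSup ((f - b) '' s), fun x hx => ?_⟩
  have hupper : sSup ((f - b) '' s) ≤ f x + b x :=
    csSup_le ⟨_, mem_image_of_mem _ hx⟩ (forall_mem_image.2 fun y hy => hcross y hy x hx)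
  have hlower : f x - b x ≤ sSup ((f - b) '' s) :=
    le_csSup ⟨(f + b) x, forall_mem_image.2 fun y hy => hcross y hy x hx⟩ (mem_image_of_mem _ hx)
  exact abs_le.2 ⟨by linarith, by linarith⟩

lemma hasDerivAt_smoothedSign_add {x : ℝ} (hx : x ≠ 0) :
    HasDerivAt (fun y => smoothedSign y + 2 * sin y / y ^ 2) (-(2 * sin x) / x ^ 3) x := by
  refine ((hasDerivAt_smoothedSign hx).add
    (((hasDerivAt_sin x).const_mul 2).div (hasDerivAt_pow 2 x) (pow_ne_zero 2 hx))).congr_deriv ?_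
  field_simp
  ring

lemma exists_pos_abs_smoothedSign_sub_le :
    ∃ l > 0, ∀ x > 0, |smoothedSign x - l| ≤ 3 / x ^ 2 := by
  have hderiv_inv : ∀ x ∈ Ioi (0 : ℝ), HasDerivAt (fun y => 1 / y ^ 2) (-(2 / x ^ 3)) x :=
    fun x hx => by
      have hx0 : x ≠ 0 := ne_of_gt hx
      refine ((hasDerivAt_const x (1 : ℝ)).div (hasDerivAt_pow 2 x)
        (pow_ne_zero 2 hx0)).congr_deriv ?_
      field_simp
      ring
  -- Removing the oscillating part `2 sin x / x²` leaves a derivative of order `x⁻³`.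
  obtain ⟨l, hl⟩ := exists_abs_sub_le_of_abs_deriv_le (convex_Ioi 0)
    (fun x hx => hasDerivAt_smoothedSign_add (ne_of_gt hx)) hderiv_inv
    (fun x _ => by positivity) (fun x (hx : 0 < x) => by
      rw [abs_div, abs_neg, abs_mul, abs_two, abs_of_pos (pow_pos hx 3)]
      gcongr
      exact mul_le_of_le_one_right zero_le_two (abs_sin_le_one x))
  refine ⟨l, ?_, fun x hx => ?_⟩
  · have hpi := (abs_le.1 (hl (π / 2) (half_pos pi_pos))).2
    have hF := smoothedSign_nonneg ⟨pi_div_two_pos.le, half_le_self pi_pos.le⟩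
    have hpos : 0 < 1 / (π / 2) ^ 2 := by positivity
    rw [sin_pi_div_two, mul_one, ← mul_one_div 2] at hpi
    linarith
  · have hosc : |2 * sin x / x ^ 2| ≤ 2 / x ^ 2 := by
      rw [abs_div, abs_mul, abs_two, abs_of_pos (pow_pos hx 2)]
      gcongr
      exact mul_le_of_le_one_right zero_le_two (abs_sin_le_one x)
    calc |smoothedSign x - l|
        = |(smoothedSign x + 2 * sin x / x ^ 2 - l) - 2 * sin x / x ^ 2| := by ring_nf
      _ ≤ |smoothedSign x + 2 * sin x / x ^ 2 - l| + |2 * sin x / x ^ 2| := abs_sub _ _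
      _ ≤ 1 / x ^ 2 + 2 / x ^ 2 := add_le_add (hl x hx) hosc
      _ = 3 / x ^ 2 := by ring

lemma exists_abs_smoothedSign_sub_le_smoothingError :
    ∃ l > 0, ∃ C > 0, ∀ x, 0 ≤ x → |smoothedSign x - l| ≤ C * smoothingError x := by
  obtain ⟨l, hl, htail⟩ := exists_pos_abs_smoothedSign_sub_le
  refine ⟨l, hl, 16 * (3 + l), by positivity, fun x hx => ?_⟩
  suffices |smoothedSign x - l| * (1 + x ^ 2) ≤ 2 * (3 + l) by
    calc |smoothedSign x - l| ≤ 2 * (3 + l) / (1 + x ^ 2) := (le_div_iff₀ (by positivity)).2 this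
      _ = 16 * (3 + l) * (1 / (8 * (1 + x ^ 2))) := by field_simp; norm_num
      _ ≤ 16 * (3 + l) * smoothingError x := by
          gcongr; exact inv_one_add_sq_le_smoothingError x
  rcases le_total x 1 with hx1 | hx1
  · calc |smoothedSign x - l| * (1 + x ^ 2) ≤ (1 + l) * (1 + 1) := by
          gcongr
          · exact (abs_sub _ _).trans (add_le_add
              ((abs_smoothedSign_le x).trans ((abs_of_nonneg hx).trans_le hx1)) (abs_of_pos hl).le)
          · exact pow_le_one₀ hx hx1
      _ ≤ 2 * (3 + l) := by linarith
  · have hx0 : 0 < x := by linarith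
    calc |smoothedSign x - l| * (1 + x ^ 2) ≤ 3 / x ^ 2 * (x ^ 2 + x ^ 2) := by
          gcongr
          exacts [htail x hx0, one_le_pow₀ hx1]
      _ = 6 := by field_simp; norm_num
      _ ≤ 2 * (3 + l) := by linarith

lemma exists_abs_step_sub_smoothedSign_le : ∃ a > 0, ∃ C > 0, ∀ x : ℝ,
    |(Ici 0).indicator 1 x - 1 / 2 - a * smoothedSign x| ≤ C * smoothingError x := by
  obtain ⟨l, hl, C, hC, hle⟩ := exists_abs_smoothedSign_sub_le_smoothingError
  have habs : ∀ y, |1 / 2 - 1 / (2 * l) * y| = 1 / (2 * l) * |y - l| := fun y => by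
    rw [show 1 / 2 - 1 / (2 * l) * y = -(1 / (2 * l) * (y - l)) by field_simp; ring, abs_neg,
      abs_mul, abs_of_pos (by positivity)]
  refine ⟨1 / (2 * l), by positivity, 1 / (2 * l) * C, by positivity, fun x => ?_⟩
  rw [mul_assoc (1 / (2 * l))]
  rcases le_or_gt 0 x with hx | hx
  · rw [indicator_of_mem (mem_Ici.2 hx), Pi.one_apply, show (1 : ℝ) - 1 / 2 = 1 / 2 by norm_num,
      habs]
    gcongr
    exact hle x hx
  · rw [indicator_of_notMem (notMem_Ici.2 hx), ← smoothingError_neg, ← abs_neg,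
      show -((0 : ℝ) - 1 / 2 - 1 / (2 * l) * smoothedSign x)
        = 1 / 2 - 1 / (2 * l) * smoothedSign (-x) by rw [smoothedSign_neg]; ring, habs]
    gcongr
    exact hle (-x) (by linarith)

end Kernels

section Smoothing

lemma abs_integral_cosTransform_le {w : ℝ → ℝ} {μ : Measure ℝ} [IsFiniteMeasure μ]
    (hw : IntervalIntegrable w volume 0 1) (hw1 : ∀ t ∈ Ioc (0 : ℝ) 1, |w t| ≤ 1) :
    |∫ x, cosTransform w x ∂μ| ≤ ∫ t in 0..1, ‖charFun μ t‖ := by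
  rw [integral_cosTransform hw, ← norm_eq_abs]
  refine intervalIntegral.norm_integral_le_of_norm_le zero_le_one
    (Eventually.of_forall fun t ht => ?_) intervalIntegrable_charFun.norm
  rw [norm_mul]
  exact (mul_le_of_le_one_left (norm_nonneg _) (hw1 t ht)).trans (Complex.abs_re_le_norm _)

lemma abs_integral_sinTransform_le {w : ℝ → ℝ} {μ : Measure ℝ} [IsFiniteMeasure μ]
    (hw : IntervalIntegrable w volume 0 1) (hw1 : ∀ t ∈ Ioc (0 : ℝ) 1, |w t| ≤ 1)
    (hμ : Integrable id μ) :
    |∫ x, sinTransform w x ∂μ| ≤ ∫ t in 0..1, |(charFun μ t).im / t| := by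
  rw [integral_sinTransform hw hμ, ← norm_eq_abs]
  refine intervalIntegral.norm_integral_le_of_norm_le zero_le_one
    (Eventually.of_forall fun t ht => ?_) (intervalIntegrable_im_charFun_div hμ).abs
  rw [norm_mul]
  exact mul_le_of_le_one_left (norm_nonneg _) (hw1 t ht)

lemma abs_measureReal_sub_le {Ω : Type*} [MeasurableSpace Ω] {μ : Measure Ω}
    [IsProbabilityMeasure μ] {s : Set Ω} (hs : MeasurableSet s) {c : ℝ} {f g : Ω → ℝ}
    (hf : Integrable f μ) (hg : Integrable g μ) (hle : ∀ x, |s.indicator 1 x - c - f x| ≤ g x) :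
    |μ.real s - c| ≤ ∫ x, g x ∂μ + |∫ x, f x ∂μ| := by
  have hind : Integrable (s.indicator (1 : Ω → ℝ)) μ := (integrable_const (1 : ℝ)).indicator hs
  have hstep : Integrable (fun x => s.indicator (1 : Ω → ℝ) x - c) μ :=
    hind.sub (integrable_const c)
  have hdecomp : μ.real s - c = ∫ x, (s.indicator 1 x - c - f x) ∂μ + ∫ x, f x ∂μ := by
    rw [integral_sub hstep hf, sub_add_cancel, integral_sub hind (integrable_const c),
      integral_const, probReal_univ, one_smul, integral_indicator_one hs]
  rw [hdecomp]
  refine (abs_add_le _ _).trans (add_le_add_left ?_ _)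
  exact norm_integral_le_of_norm_le hg
    (Eventually.of_forall fun x => (norm_eq_abs _).trans_le (hle x))

lemma exists_abs_measureReal_Ici_sub_half_le_integral_charFun :
    ∃ C > 0, ∀ (μ : Measure ℝ) [IsProbabilityMeasure μ], Integrable id μ →
      |μ.real (Ici 0) - 1 / 2| ≤ C * ∫ t in 0..1, (|(charFun μ t).im / t| + ‖charFun μ t‖) := by
  obtain ⟨a, ha, C, hC, hle⟩ := exists_abs_step_sub_smoothedSign_le
  refine ⟨a + C, by positivity, fun μ _ hμ => ?_⟩
  have hsign : |∫ x, smoothedSign x ∂μ| ≤ ∫ t in 0..1, |(charFun μ t).im / t| :=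
    abs_integral_sinTransform_le intervalIntegrable_one_sub_sq (fun t => abs_one_sub_sq_le) hμ
  have herror : ∫ x, smoothingError x ∂μ ≤ ∫ t in 0..1, ‖charFun μ t‖ :=
    (le_abs_self _).trans (abs_integral_cosTransform_le intervalIntegrable_sq_one_sub
      (fun t => abs_sq_one_sub_le))
  have hnorm : 0 ≤ ∫ t in 0..1, ‖charFun μ t‖ :=
    intervalIntegral.integral_nonneg zero_le_one fun _ _ => norm_nonneg _
  have hdiv : 0 ≤ ∫ t in 0..1, |(charFun μ t).im / t| := (abs_nonneg _).trans hsign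
  calc |μ.real (Ici 0) - 1 / 2|
      ≤ ∫ x, C * smoothingError x ∂μ + |∫ x, a * smoothedSign x ∂μ| :=
        abs_measureReal_sub_le measurableSet_Ici
          ((integrable_sinTransform intervalIntegrable_one_sub_sq hμ).const_mul a)
          ((integrable_cosTransform intervalIntegrable_sq_one_sub).const_mul C) hle
    _ = C * ∫ x, smoothingError x ∂μ + a * |∫ x, smoothedSign x ∂μ| := by
        rw [integral_const_mul, integral_const_mul, abs_mul, abs_of_pos ha]
    _ ≤ C * (∫ t in 0..1, ‖charFun μ t‖) + a * ∫ t in 0..1, |(charFun μ t).im / t| := by gcongr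
    _ ≤ (a + C) * (∫ t in 0..1, ‖charFun μ t‖)
          + (a + C) * ∫ t in 0..1, |(charFun μ t).im / t| := by
        gcongr
        exacts [le_add_of_nonneg_left ha.le, le_add_of_nonneg_right hC.le]
    _ = (a + C) * ∫ t in 0..1, (|(charFun μ t).im / t| + ‖charFun μ t‖) := by
        rw [intervalIntegral.integral_add (intervalIntegrable_im_charFun_div hμ).abs
          intervalIntegrable_charFun.norm]
        ring

lemma exists_abs_measureReal_Ici_sub_half_le_integral_charFun_mul :
    ∃ C > 0, ∀ (μ : Measure ℝ) [IsProbabilityMeasure μ], Integrable id μ → ∀ T > 0,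
      |μ.real (Ici 0) - 1 / 2| ≤
        C * ∫ t in 0..1, (|(charFun μ (T * t)).im / t| + ‖charFun μ (T * t)‖) := by
  obtain ⟨C, hC, hle⟩ := exists_abs_measureReal_Ici_sub_half_le_integral_charFun
  refine ⟨C, hC, fun μ _ hμ T hT => ?_⟩
  have := Measure.isProbabilityMeasure_map (μ := μ) (measurable_const_mul T).aemeasurable
  have hIci : (μ.map (T * ·)).real (Ici 0) = μ.real (Ici 0) := by
    rw [map_measureReal_apply (measurable_const_mul T) measurableSet_Ici]
    congr 1
    ext x
    simp [mul_nonneg_iff_of_pos_left hT]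
  simpa only [hIci, charFun_map_mul] using hle (μ.map (T * ·))
    ((integrable_map_measure aestronglyMeasurable_id (measurable_const_mul T).aemeasurable).2
      (hμ.const_mul T))

end Smoothing

section Moments

lemma abs_im_charFun_le {μ : Measure ℝ} [IsFiniteMeasure μ] (hμ : MemLp id 3 μ)
    (hmean : ∫ x, x ∂μ = 0) (t : ℝ) :
    |(charFun μ t).im| ≤ |t| ^ 3 / 6 * ∫ x, |x| ^ 3 ∂μ := by
  have hint : Integrable (fun x => t * x) μ := (hμ.integrable (by norm_num)).const_mul t
  have hsin : Integrable (fun x => sin (t * x)) μ :=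
    Integrable.of_bound (by fun_prop) 1 (Eventually.of_forall fun x => abs_sin_le_one _)
  have hcube : Integrable (fun x => |x| ^ 3) μ := by
    simpa using hμ.integrable_norm_pow (by norm_num)
  have him : (charFun μ t).im = -∫ x, (t * x - sin (t * x)) ∂μ := by
    rw [integral_sub hint hsin, integral_const_mul, hmean, mul_zero, zero_sub, neg_neg, im_charFun]
  rw [him, abs_neg, ← integral_const_mul, ← norm_eq_abs]
  refine norm_integral_le_of_norm_le (hcube.const_mul _) (Eventually.of_forall fun x => ?_)
  rw [norm_eq_abs]
  refine (abs_sub_sin_le _).trans_eq ?_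
  rw [abs_mul]
  ring

lemma eventually_norm_charFun_le {μ : Measure ℝ} [IsProbabilityMeasure μ] (hμ : MemLp id 2 μ)
    (hmean : ∫ x, x ∂μ = 0) (hvar : 0 < ∫ x, x ^ 2 ∂μ) :
    ∀ᶠ t in 𝓝 0, ‖charFun μ t‖ ≤ exp (-((∫ x, x ^ 2 ∂μ) / 4 * t ^ 2)) := by
  set s := ∫ x, x ^ 2 ∂μ
  have htaylor : ∀ t, taylorWithinEval (charFun μ) 2 univ 0 t = (1 - s / 2 * t ^ 2 : ℝ) := by
    intro t
    rw [taylorWithinEval_charFun_zero hμ]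
    simp only [Finset.sum_range_succ, Finset.sum_range_zero, hmean, pow_zero, pow_one, mul_pow,
      Complex.I_sq, Nat.factorial_zero, Nat.factorial_two, Nat.cast_one, Nat.cast_ofNat, inv_one,
      integral_const, probReal_univ, one_smul, Complex.ofReal_zero, Complex.ofReal_one]
    push_cast
    ring
  have hlittle :=
    (taylor_isLittleO_univ (x₀ := 0) (contDiff_charFun hμ)).def (div_pos hvar four_pos)
  have hsmall : ∀ᶠ t in 𝓝 (0 : ℝ), s / 2 * t ^ 2 < 1 :=
    ContinuousAt.eventually_lt (by fun_prop) continuousAt_const (by norm_num)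
  filter_upwards [hlittle, hsmall] with t ht ht1
  rw [htaylor, sub_zero, norm_pow, norm_eq_abs, sq_abs] at ht
  calc ‖charFun μ t‖ ≤ ‖((1 - s / 2 * t ^ 2 : ℝ) : ℂ)‖ + ‖charFun μ t - (1 - s / 2 * t ^ 2 : ℝ)‖ :=
        norm_le_norm_add_norm_sub' _ _
    _ ≤ (1 - s / 2 * t ^ 2) + s / 4 * t ^ 2 := by
        gcongr
        rw [Complex.norm_real, norm_of_nonneg (by linarith)]
    _ = -(s / 4 * t ^ 2) + 1 := by ring
    _ ≤ exp (-(s / 4 * t ^ 2)) := add_one_le_exp _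

end Moments

section Sums

lemma abs_im_pow_succ_le (z : ℂ) (n : ℕ) :
    |(z ^ (n + 1)).im| ≤ (n + 1) * (|z.im| * ‖z‖ ^ n) := by
  induction n with
  | zero => simp
  | succ n ih =>
    calc |(z ^ (n + 1 + 1)).im| = |(z ^ (n + 1)).re * z.im + (z ^ (n + 1)).im * z.re| := by
          rw [pow_succ _ (n + 1), Complex.mul_im]
      _ ≤ |(z ^ (n + 1)).re| * |z.im| + |(z ^ (n + 1)).im| * |z.re| := by
          simpa only [abs_mul] using abs_add_le ((z ^ (n + 1)).re * z.im) ((z ^ (n + 1)).im * z.re)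
      _ ≤ ‖z‖ ^ (n + 1) * |z.im| + (n + 1) * (|z.im| * ‖z‖ ^ n) * ‖z‖ := by
          gcongr
          exacts [(Complex.abs_re_le_norm _).trans_eq (norm_pow z _), Complex.abs_re_le_norm z]
      _ = ((n + 1 : ℕ) + 1) * (|z.im| * ‖z‖ ^ (n + 1)) := by push_cast; ring

lemma abs_im_pow_div_add_norm_pow_le {z : ℂ} {b c t : ℝ} (hb : 0 ≤ b) (hc : 0 < c)
    (ht : t ∈ Ioc 0 1) (him : |z.im| ≤ b * t ^ 3) (hz : ‖z‖ ≤ exp (-(c * t ^ 2)))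
    {n : ℕ} (hn : n ≠ 0) :
    |(z ^ n).im / t| + ‖z ^ n‖ ≤ (2 * b / c * exp c + 1) * exp (-(c * n / 2) * t ^ 2) := by
  obtain ⟨n, rfl⟩ := Nat.exists_eq_succ_of_ne_zero hn
  set y := c * (n + 1) * t ^ 2 with hy
  have ht2 : t ^ 2 ≤ 1 := pow_le_one₀ ht.1.le ht.2
  have hpow : ∀ m : ℕ, ‖z‖ ^ m ≤ exp (-(c * m * t ^ 2)) := fun m =>
    (pow_le_pow_left₀ (norm_nonneg z) hz m).trans_eq (by rw [← exp_nat_mul]; congr 1; ring)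
  have hnorm : ‖z ^ (n + 1)‖ ≤ exp (-(y / 2)) := by
    rw [norm_pow]
    refine (hpow (n + 1)).trans (exp_le_exp.2 ?_)
    have : 0 ≤ y := by positivity
    push_cast
    linarith
  have him' : |(z ^ (n + 1)).im / t| ≤ 2 * b / c * exp c * exp (-(y / 2)) := by
    rw [abs_div, abs_of_pos ht.1, div_le_iff₀ ht.1]
    calc |(z ^ (n + 1)).im| ≤ (n + 1) * (b * t ^ 3 * exp (-(c * n * t ^ 2))) :=
          (abs_im_pow_succ_le z n).trans
            (by gcongr; exacts [mul_nonneg hb (pow_nonneg ht.1.le 3), hpow n])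
      _ = b / c * (y * exp (-(c * n * t ^ 2))) * t := by rw [hy]; field_simp
      _ ≤ b / c * (2 * exp (y / 2) * (exp c * exp (-y))) * t := by
          have := ht.1
          gcongr
          · linarith [add_one_le_exp (y / 2)]
          · rw [← exp_add]
            gcongr
            rw [hy]
            nlinarith
      _ = 2 * b / c * exp c * exp (-(y / 2)) * t := by
          rw [show exp (-(y / 2)) = exp (y / 2) * exp (-y) by rw [← exp_add]; congr 1; ring]
          ring
  have hexponent : -(c * (n + 1 : ℕ) / 2) * t ^ 2 = -(y / 2) := by
    rw [hy]
    push_cast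
    ring
  rw [hexponent, add_mul, one_mul]
  exact add_le_add him' hnorm

lemma integral_exp_neg_mul_sq_le {b : ℝ} (hb : 0 < b) :
    ∫ t in 0..1, exp (-b * t ^ 2) ≤ √(π / b) := by
  rw [intervalIntegral.integral_of_le zero_le_one, ← integral_gaussian b]
  exact setIntegral_le_integral (integrable_exp_neg_mul_sq hb)
    (Eventually.of_forall fun t => (exp_pos _).le)

lemma exists_abs_im_charFun_pow_div_add_norm_le {ν : Measure ℝ} [IsProbabilityMeasure ν]
    (hν : MemLp id 3 ν) (hmean : ∫ x, x ∂ν = 0) (hvar : 0 < ∫ x, x ^ 2 ∂ν) :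
    ∃ T > 0, ∃ M > 0, ∃ c > 0, ∀ n : ℕ, n ≠ 0 → ∀ t ∈ Ioc (0 : ℝ) 1,
      |(charFun ν (T * t) ^ n).im / t| + ‖charFun ν (T * t) ^ n‖ ≤ M * exp (-(c * n) * t ^ 2) := by
  obtain ⟨T, hT, hdecay⟩ := Metric.nhds_basis_closedBall.eventually_iff.1
    (eventually_norm_charFun_le (hν.mono_exponent (by norm_num)) hmean hvar)
  set c := (∫ x, x ^ 2 ∂ν) / 4 * T ^ 2 with hc_def
  set b := T ^ 3 / 6 * ∫ x, |x| ^ 3 ∂ν with hb_def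
  have hc : 0 < c := by positivity
  have hb : 0 ≤ b := mul_nonneg (by positivity) (integral_nonneg fun x => by positivity)
  refine ⟨T, hT, 2 * b / c * exp c + 1, by positivity, c / 2, half_pos hc, fun n hn t ht => ?_⟩
  have hTt : 0 < T * t := mul_pos hT ht.1
  have him : |(charFun ν (T * t)).im| ≤ b * t ^ 3 := by
    refine (abs_im_charFun_le hν hmean _).trans_eq ?_
    rw [abs_of_pos hTt, hb_def]
    ring
  have hnorm : ‖charFun ν (T * t)‖ ≤ exp (-(c * t ^ 2)) := by
    refine (hdecay ?_).trans_eq (by rw [hc_def]; ring_nf)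
    rw [mem_closedBall_zero_iff, norm_of_nonneg hTt.le]
    exact mul_le_of_le_one_right hT.le ht.2
  convert abs_im_pow_div_add_norm_pow_le hb hc ht him hnorm hn using 4
  ring

lemma exists_abs_measureReal_Ici_sub_half_le_div_sqrt {ν : Measure ℝ} [IsProbabilityMeasure ν]
    (hν : MemLp id 3 ν) (hmean : ∫ x, x ∂ν = 0) (hvar : 0 < ∫ x, x ^ 2 ∂ν) :
    ∃ C > 0, ∀ n : ℕ, n ≠ 0 → ∀ (μ : Measure ℝ) [IsProbabilityMeasure μ], Integrable id μ →
      charFun μ = charFun ν ^ n → |μ.real (Ici 0) - 1 / 2| ≤ C / √n := by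
  obtain ⟨K, hK, hsmooth⟩ := exists_abs_measureReal_Ici_sub_half_le_integral_charFun_mul
  obtain ⟨T, hT, M, hM, c, hc, hbound⟩ :=
    exists_abs_im_charFun_pow_div_add_norm_le hν hmean hvar
  refine ⟨K * (M * √(π / c)), by positivity, fun n hn μ _ hμ hpow => ?_⟩
  calc |μ.real (Ici 0) - 1 / 2|
      ≤ K * ∫ t in 0..1, (|(charFun μ (T * t)).im / t| + ‖charFun μ (T * t)‖) :=
        hsmooth μ hμ T hT
    _ ≤ K * ∫ t in 0..1, M * exp (-(c * n) * t ^ 2) := by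
        gcongr
        have hgauss : IntervalIntegrable (fun t => M * exp (-(c * n) * t ^ 2)) volume 0 1 :=
          Continuous.intervalIntegrable (by fun_prop) _ _
        refine (le_norm_self _).trans (intervalIntegral.norm_integral_le_of_norm_le zero_le_one
          (Eventually.of_forall fun t ht => ?_) hgauss)
        rw [norm_of_nonneg (by positivity), hpow]
        exact hbound n hn t ht
    _ ≤ K * (M * √(π / (c * n))) := by
        rw [intervalIntegral.integral_const_mul]
        gcongr
        exact integral_exp_neg_mul_sq_le (by positivity)
    _ = K * (M * √(π / c)) / √n := by
        rw [mul_div_assoc, mul_div_assoc, ← div_div, sqrt_div (by positivity)]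

section Pi

variable {ι α : Type*} [Fintype ι] [MeasurableSpace α] {μ : Measure α} [IsProbabilityMeasure μ]
  {f : α → ℝ}

lemma aemeasurable_sum_pi (hf : AEMeasurable f μ) :
    AEMeasurable (fun a : ι → α => ∑ i, f (a i)) (Measure.pi fun _ => μ) :=
  Finset.aemeasurable_fun_sum _ fun i _ =>
    hf.comp_quasiMeasurePreserving (Measure.quasiMeasurePreserving_eval (fun _ => μ) i)

lemma charFun_map_sum_pi_eq_pow (hf : AEMeasurable f μ) :
    charFun ((Measure.pi fun _ : ι => μ).map fun a => ∑ i, f (a i)) =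
      charFun (μ.map f) ^ Fintype.card ι := by
  have := Measure.isProbabilityMeasure_map hf
  have haem : AEMeasurable (fun (a : ι → α) i => f (a i)) (Measure.pi fun _ => μ) :=
    aemeasurable_pi_lambda _ fun i =>
      hf.comp_quasiMeasurePreserving (Measure.quasiMeasurePreserving_eval (fun _ => μ) i)
  have hlaw : (Measure.pi fun _ => μ).map (fun a : ι → α => ∑ i, f (a i)) =
      (Measure.pi fun _ : ι => μ.map f).map fun x => ∑ i, x i := by
    rw [← Measure.pi_map_pi fun _ : ι => hf,
      AEMeasurable.map_map_of_aemeasurable (by fun_prop) haem]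
    rfl
  rw [hlaw, charFun_map_sum_pi_eq_prod, Finset.prod_const, Finset.card_univ]

lemma exists_abs_pi_measureReal_sum_nonneg_sub_half_le (hf : MemLp f 3 μ)
    (hmean : ∫ a, f a ∂μ = 0) (hvar : 0 < ∫ a, f a ^ 2 ∂μ) :
    ∃ C > 0, ∀ n : ℕ, n ≠ 0 →
      |(Measure.pi fun _ : Fin n => μ).real {a | 0 ≤ ∑ i, f (a i)} - 1 / 2| ≤ C / √n := by
  have hfm : AEMeasurable f μ := hf.1.aemeasurable
  have := Measure.isProbabilityMeasure_map hfm
  obtain ⟨C, hC, hle⟩ := exists_abs_measureReal_Ici_sub_half_le_div_sqrt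
    (ν := μ.map f) ((memLp_map_measure_iff aestronglyMeasurable_id hfm).2 hf)
    ((integral_map hfm aestronglyMeasurable_id).trans hmean)
    (hvar.trans_eq (integral_map (f := fun x => x ^ 2) hfm (by fun_prop)).symm)
  refine ⟨C, hC, fun n hn => ?_⟩
  have hsum : AEMeasurable (fun a : Fin n → α => ∑ i, f (a i)) (Measure.pi fun _ => μ) :=
    aemeasurable_sum_pi hfm
  have := Measure.isProbabilityMeasure_map hsum
  have hint : Integrable (fun a : Fin n → α => ∑ i, f (a i)) (Measure.pi fun _ => μ) :=
    integrable_finsetSum _ fun i _ => integrable_comp_eval (hf.integrable (by norm_num))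
  have hclt := hle n hn ((Measure.pi fun _ : Fin n => μ).map fun a => ∑ i, f (a i))
    ((integrable_map_measure aestronglyMeasurable_id hsum).2 hint)
    ((charFun_map_sum_pi_eq_pow hfm).trans (by rw [Fintype.card_fin]))
  rwa [map_measureReal_apply_of_aemeasurable hsum measurableSet_Ici] at hclt

lemma exists_half_sub_le_pi_measureReal_sum_nonneg (hf : MemLp f 3 μ)
    (hmean : ∫ a, f a ∂μ = 0) :
    ∃ C > 0, ∀ n : ℕ, n ≠ 0 →
      1 / 2 - C / √n ≤ (Measure.pi fun _ : Fin n => μ).real {a | 0 ≤ ∑ i, f (a i)} := by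
  have hsq : Integrable (fun a => f a ^ 2) μ :=
    (hf.mono_exponent (by norm_num : (2 : ENNReal) ≤ 3)).integrable_sq
  have hnonneg : 0 ≤ fun a => f a ^ 2 := fun a => sq_nonneg (f a)
  rcases (integral_nonneg (μ := μ) hnonneg).eq_or_lt with hvar | hvar
  · have hzero : ∀ᵐ a ∂μ, f a = 0 := by
      filter_upwards [(integral_eq_zero_iff_of_nonneg hnonneg hsq).1 hvar.symm]
        with a ha using pow_eq_zero_iff two_ne_zero |>.1 ha
    refine ⟨1, one_pos, fun n _ => ?_⟩
    have hsum : ∀ᵐ a ∂(Measure.pi fun _ : Fin n => μ), 0 ≤ ∑ i, f (a i) := by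
      filter_upwards [ae_all_iff.2 fun i : Fin n =>
        (Measure.quasiMeasurePreserving_eval (fun _ => μ) i).ae hzero] with a ha
      exact (Finset.sum_eq_zero fun i _ => ha i).ge
    rw [measureReal_congr (eventuallyEq_univ.2 hsum), probReal_univ]
    linarith [show 0 ≤ 1 / √n by positivity]
  · obtain ⟨C, hC, hle⟩ := exists_abs_pi_measureReal_sum_nonneg_sub_half_le hf hmean hvar
    exact ⟨C, hC, fun n hn => by linarith [(abs_le.1 (hle n hn)).1]⟩

end Pi

end Sums

section Discrete

variable {A : Type*}

/-- The Shannon entropy, in bits, of the distribution with mass function `P` on a discrete type. -/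
noncomputable def shannonEntropy (P : A → ℝ) : ℝ := -∑' x, P x * logb 2 (P x)

/-- The core set `C^{n,δ}`: the strings of length `n` whose probability under the `n`-fold product
of the distribution with mass function `P` is at least `2 ^ (-H n - δ n)`. -/
def coreSet (P : A → ℝ) (n : ℕ) (δ : ℝ) : Set (Fin n → A) :=
  {a | (2 : ℝ) ^ (-(shannonEntropy P * n) - δ * n) ≤ ∏ i, P (a i)}

lemma setOf_sum_nonneg_subset_coreSet {P : A → ℝ} (hpos : ∀ a, 0 < P a) (n : ℕ) {δ : ℝ}
    (hδ : 0 ≤ δ) :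
    {a : Fin n → A | 0 ≤ ∑ i, (logb 2 (P (a i)) + shannonEntropy P)} ⊆ coreSet P n δ := by
  intro a ha
  have hprod : ∏ i, P (a i) = (2 : ℝ) ^ ∑ i, logb 2 (P (a i)) := by
    rw [rpow_sum_of_pos two_pos]
    exact Finset.prod_congr rfl fun i _ =>
      (rpow_logb two_pos (by norm_num) (hpos (a i))).symm
  have hsum : 0 ≤ ∑ i, logb 2 (P (a i)) + n * shannonEntropy P := by
    simpa [Finset.sum_add_distrib] using ha
  rw [coreSet, mem_ofPred_eq, hprod]
  exact rpow_le_rpow_of_exponent_le one_le_two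
    (by linarith [mul_nonneg hδ n.cast_nonneg])

lemma tsum_coreSet_eq_sum_filter [Fintype A] (P : A → ℝ) (n : ℕ) (δ : ℝ) :
    ∑' a : coreSet P n δ, ∏ i, P (a.1 i) =
      ∑ a : Fin n → A with (2 : ℝ) ^ (-((-∑ x, P x * logb 2 (P x)) * n) - δ * n) ≤ ∏ i, P (a i),
        ∏ i, P (a i) := by
  rw [tsum_subtype (coreSet P n δ) fun a => ∏ i, P (a i), tsum_fintype, Finset.sum_filter]
  simp only [indicator_apply, coreSet, shannonEntropy, tsum_fintype, mem_ofPred_eq]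

variable [MeasurableSpace A] [MeasurableSingletonClass A]

lemma exists_isProbabilityMeasure_measureReal_singleton_eq {P : A → ℝ} (hnonneg : ∀ a, 0 ≤ P a)
    (hsum : HasSum P 1) :
    ∃ μ : Measure A, IsProbabilityMeasure μ ∧ ∀ a, μ.real {a} = P a := by
  refine ⟨.sum fun a => ENNReal.ofReal (P a) • .dirac a, ⟨?_⟩, fun a => ?_⟩
  · simp [← ENNReal.ofReal_tsum_of_nonneg hnonneg hsum.summable, hsum.tsum_eq]
  · rw [measureReal_def, Measure.sum_smul_dirac_singleton, ENNReal.toReal_ofReal (hnonneg a)]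

variable [Countable A] {μ : Measure A}

lemma integral_logb_measureReal_singleton_eq_neg_shannonEntropy
    (hlog : Integrable (fun a => logb 2 (μ.real {a})) μ) :
    ∫ a, logb 2 (μ.real {a}) ∂μ = -shannonEntropy fun a => μ.real {a} := by
  simp only [integral_countable hlog, shannonEntropy, smul_eq_mul, neg_neg]

variable [IsFiniteMeasure μ]

lemma integrable_iff_summable_measureReal_singleton {f : A → ℝ} :
    Integrable f μ ↔ Summable fun a => μ.real {a} * |f a| := by
  conv_lhs => rw [← μ.sum_smul_dirac]
  exact integrable_sum_dirac_iff fun a => measure_ne_top μ {a}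

lemma pi_measureReal_eq_tsum {ι : Type*} [Fintype ι] (s : Set (ι → A)) :
    (Measure.pi fun _ => μ).real s = ∑' a : s, ∏ i, μ.real {a.1 i} := by
  simp only [measureReal_def, ← ENNReal.toReal_prod, ← Measure.pi_singleton]
  rw [← ENNReal.tsum_toReal_eq fun a => measure_ne_top _ _]
  congr 1
  exact (tsum_measure_preimage_singleton (f := id) s.to_countable
    fun a _ => measurableSet_singleton a).symm

lemma memLp_iff_summable_measureReal_singleton {f : A → ℝ} {p : ENNReal} (hp0 : p ≠ 0)
    (hp : p ≠ ⊤) : MemLp f p μ ↔ Summable fun a => μ.real {a} * |f a| ^ p.toReal := by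
  rw [← integrable_norm_rpow_iff .of_discrete hp0 hp,
    integrable_iff_summable_measureReal_singleton]
  simp only [norm_eq_abs, abs_rpow_of_nonneg (abs_nonneg _), abs_abs]

end Discrete

theorem core_set_mass_general {A : Type*} (P : A → ℝ) (hpos : ∀ a, 0 < P a) (hsum : HasSum P 1)
    (hlog : Summable fun a => P a * |logb 2 (P a)| ^ 3) :
    ∃ C > (0 : ℝ), ∀ n : ℕ, 1 ≤ n → ∀ δ : ℝ, 0 ≤ δ →
      1 / 2 - C / √n ≤ ∑' a : coreSet P n δ, ∏ i, P (a.1 i) := by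
  have : Countable A := by
    have := hsum.summable.countable_support
    rwa [Function.support_eq_univ fun a => (hpos a).ne', countable_univ_iff] at this
  let _ : MeasurableSpace A := ⊤
  obtain ⟨μ, _, hμ⟩ :=
    exists_isProbabilityMeasure_measureReal_singleton_eq (fun a => (hpos a).le) hsum
  obtain rfl : (fun a => μ.real {a}) = P := funext hμ
  have hmem : MemLp (fun a => logb 2 (μ.real {a})) 3 μ :=
    (memLp_iff_summable_measureReal_singleton (by norm_num) (by norm_num)).2 (by simpa using hlog)
  have hint := hmem.integrable (by norm_num)
  obtain ⟨C, hC, hle⟩ := exists_half_sub_le_pi_measureReal_sum_nonneg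
    (hmem.add (memLp_const (shannonEntropy fun a => μ.real {a})))
    (by simp [integral_add hint, integral_logb_measureReal_singleton_eq_neg_shannonEntropy hint])
  refine ⟨C, hC, fun n hn δ hδ => ?_⟩
  rw [← pi_measureReal_eq_tsum]
  exact (hle n (by lia)).trans (measureReal_mono (setOf_sum_nonneg_subset_coreSet hpos n hδ))

end

/-- **Core set has probability mass at least 1/2 − O(1/√n).** Let `χ` be a
distribution on a finite set `A` with pmf `P`, Shannon entropy
`H(χ) = −∑ a, P a · log₂ (P a)`, and let `C^{n,δ}_χ ⊆ A^n` be the core set of strings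
`a` with `P_n(a) = ∏ i, P (a i) ≥ 2^{−H(χ)·n − δ·n}`. There is a constant `C > 0`
(depending only on `χ`) such that for every `n ≥ 1` and every `δ ≥ 0`,
`Pr_{k ← χ^n}[k ∈ C^{n,δ}_χ] ≥ 1/2 − C/√n`. -/
theorem core_set_mass {A : Type*} [Fintype A]
    (P : A → ℝ) (hpos : ∀ a, 0 < P a) (hle : ∀ a, P a ≤ 1)
    (hsum : ∑ a, P a = 1) :
    ∃ C > (0 : ℝ), ∀ n : ℕ, 1 ≤ n → ∀ δ : ℝ, 0 ≤ δ →
      1 / 2 - C / Real.sqrt n ≤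
        ∑ a ∈ Finset.univ.filter (fun a : Fin n → A =>
            (2 : ℝ) ^ (-((-∑ x, P x * Real.logb 2 (P x)) * n) - δ * n) ≤ ∏ i, P (a i)),
          ∏ i, P (a i) := by
  simpa only [tsum_coreSet_eq_sum_filter] using
    core_set_mass_general P hpos (hsum ▸ hasSum_fintype P) .of_finite
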